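/- (Fatou lemma for the mixed-norm Herz norm.) Let n ∈ ℕ, p⃗, q⃗ ∈ (0,∞]^n and α⃗ ∈ ℝⁿ. If {f_k}_{k∈ℕ} is a sequence of nonnegative measurable functions on ℝⁿ, then ‖ liminf_{k→∞} f_k ‖_{Ė^{α⃗,p⃗}_{q⃗}(ℝⁿ)} ≤ liminf_{k→∞} ‖f_k‖_{Ė^{α⃗,p⃗}_{q⃗}(ℝⁿ)}. -/

import Mathlib

open MeasureTheory ENNReal Filter

noncomputable section

/-- The dyadic annulus `R_k = (-2^k, 2^k) \ (-2^(k-1), 2^(k-1))` in `ℝ`. -/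
def herzRing (k : ℤ) : Set ℝ :=
  Set.Ioo (-(2 : ℝ) ^ k) ((2 : ℝ) ^ k) \ Set.Ioo (-(2 : ℝ) ^ (k - 1)) ((2 : ℝ) ^ (k - 1))

/-- The `L^q` "norm" (valued in `ℝ≥0∞`) of an `ℝ≥0∞`-valued function on a set `s ⊆ ℝ`,
with the usual modification when `q = ∞`. -/
def lqNormOn (q : ℝ≥0∞) (s : Set ℝ) (g : ℝ → ℝ≥0∞) : ℝ≥0∞ :=
  if q = ∞ then essSup (s.indicator g) volume
  else (∫⁻ x in s, g x ^ q.toReal) ^ (1 / q.toReal)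

/-- The `l^p` norm over `ℤ` of an `ℝ≥0∞`-valued sequence, with the usual modification
when `p = ∞`. -/
def lpZNorm (p : ℝ≥0∞) (a : ℤ → ℝ≥0∞) : ℝ≥0∞ :=
  if p = ∞ then ⨆ k, a k
  else (∑' k : ℤ, a k ^ p.toReal) ^ (1 / p.toReal)

/-- The one-dimensional Herz norm `K^{α,p}_q` of an `ℝ≥0∞`-valued function on `ℝ`. -/
def herzNorm1 (α : ℝ) (p q : ℝ≥0∞) (g : ℝ → ℝ≥0∞) : ℝ≥0∞ :=
  lpZNorm p fun k => ENNReal.ofReal ((2 : ℝ) ^ ((k : ℝ) * α)) * lqNormOn q (herzRing k) g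

/-- The mixed-norm Herz norm on `ℝⁿ` of an `ℝ≥0∞`-valued function: the Herz norm
`K^{α_1,p_1}_{q_1}` is applied in the first variable, then `K^{α_2,p_2}_{q_2}` in the
second variable, …, and finally `K^{α_n,p_n}_{q_n}` in the last variable. -/
def mixedHerzNormE : (n : ℕ) → (Fin n → ℝ) → (Fin n → ℝ≥0∞) → (Fin n → ℝ≥0∞) →
    ((Fin n → ℝ) → ℝ≥0∞) → ℝ≥0∞
  | 0, _, _, _, f => f fun i => i.elim0
  | n + 1, α, p, q, f =>
    herzNorm1 (α (Fin.last n)) (p (Fin.last n)) (q (Fin.last n)) fun xlast =>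
      mixedHerzNormE n (Fin.init α) (Fin.init p) (Fin.init q) fun y => f (Fin.snoc y xlast)

/-- The mixed-norm Herz norm `‖f‖_{Ė^{α,p}_q(ℝⁿ)}` of a complex-valued function on `ℝⁿ`. -/
def herzNormC (n : ℕ) (α : Fin n → ℝ) (p q : Fin n → ℝ≥0∞) (f : (Fin n → ℝ) → ℂ) : ℝ≥0∞ :=
  mixedHerzNormE n α p q fun x => (‖f x‖₊ : ℝ≥0∞)

/-- `I_m = (-2^m, -2^{-m}] ∪ [2^{-m}, 2^m)`. -/
def herzI (m : ℕ) : Set ℝ :=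
  Set.Ioc (-(2 : ℝ) ^ (m : ℤ)) (-(2 : ℝ) ^ (-(m : ℤ))) ∪
    Set.Ico ((2 : ℝ) ^ (-(m : ℤ))) ((2 : ℝ) ^ (m : ℤ))

/-- `A_m = I_m^n ⊆ ℝⁿ`. -/
def herzA (n m : ℕ) : Set (Fin n → ℝ) := Set.univ.pi fun _ => herzI m

/-- The class `H(ℝⁿ)` of simple functions built from finitely many pairwise disjoint
parallelepipeds contained in some `A_m`. -/
def IsHSimple (n : ℕ) (f : (Fin n → ℝ) → ℂ) : Prop :=
  ∃ (m N : ℕ) (a : Fin N → ℂ) (E : Fin N → Fin n → Set ℝ),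
    (∀ k i, MeasurableSet (E k i)) ∧
    (∀ k, Set.univ.pi (E k) ⊆ herzA n m) ∧
    (Pairwise fun k l => Disjoint (Set.univ.pi (E k)) (Set.univ.pi (E l))) ∧
    f = fun x => ∑ k, (Set.univ.pi (E k)).indicator (fun _ => a k) x

/-- The Euclidean ball `B(x,r)` in `ℝⁿ`. -/
def eucBall (n : ℕ) (x : Fin n → ℝ) (r : ℝ) : Set (Fin n → ℝ) :=
  {y | ∑ i, (y i - x i) ^ 2 < r ^ 2}

/-- The (uncentered) maximal operator in the `k`-th variable. -/
def maxVar (n : ℕ) (k : Fin n) (g : (Fin n → ℝ) → ℝ≥0∞) : (Fin n → ℝ) → ℝ≥0∞ :=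
  fun x => ⨆ (a : ℝ) (b : ℝ) (_ : x k ∈ Set.Ioo a b),
    (volume (Set.Ioo a b))⁻¹ * ∫⁻ y in Set.Ioo a b, g (Function.update x k y)

/-- The centered Hardy–Littlewood maximal operator on `ℝⁿ`. -/
def centeredMax (n : ℕ) (g : (Fin n → ℝ) → ℝ≥0∞) : (Fin n → ℝ) → ℝ≥0∞ :=
  fun x => ⨆ (r : ℝ) (_ : 0 < r),
    (volume (eucBall n x r))⁻¹ * ∫⁻ y in eucBall n x r, g y

/-- The composition `M_n ∘ ⋯ ∘ M_1` of the maximal operators in each variable. -/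
def iteratedMax (n : ℕ) (g : (Fin n → ℝ) → ℝ≥0∞) : (Fin n → ℝ) → ℝ≥0∞ :=
  (List.ofFn fun k : Fin n => maxVar n k).foldl (fun h F => F h) g

/-- The iterated maximal operator `ℳ_t(f) = [M_n ⋯ M_1(|f|^t)]^{1/t}`. -/
def iterMaxPow (n : ℕ) (t : ℝ) (f : (Fin n → ℝ) → ℂ) : (Fin n → ℝ) → ℝ≥0∞ :=
  fun x => iteratedMax n (fun y => (‖f y‖₊ : ℝ≥0∞) ^ t) x ^ (1 / t)

/-- The `l^r`-Herz type mixed norm of a sequence of functions on `ℝⁿ`. -/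
def herzSeqNorm (n : ℕ) (r : ℝ≥0∞) (α : Fin n → ℝ) (p q : Fin n → ℝ≥0∞)
    (F : ℤ → (Fin n → ℝ) → ℂ) : ℝ≥0∞ :=
  mixedHerzNormE n α p q fun x => lpZNorm r fun j => (‖F j x‖₊ : ℝ≥0∞)

/-- `N` is a ball quasi-Banach function norm on (nonnegative extended-real-valued)
measurable functions on `ℝⁿ`. -/
def IsBQBFNorm (n : ℕ) (N : ((Fin n → ℝ) → ℝ≥0∞) → ℝ≥0∞) : Prop :=
  (∀ f : (Fin n → ℝ) → ℝ≥0∞, Measurable f → N f = 0 → f =ᵐ[volume] 0) ∧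
  (∀ f g : (Fin n → ℝ) → ℝ≥0∞, Measurable f → Measurable g →
    (∀ᵐ x ∂volume, g x ≤ f x) → N g ≤ N f) ∧
  (∀ (fm : ℕ → (Fin n → ℝ) → ℝ≥0∞) (f : (Fin n → ℝ) → ℝ≥0∞),
    (∀ m, Measurable (fm m)) → Measurable f →
    (∀ᵐ x ∂volume, Monotone (fun m => fm m x) ∧
      Tendsto (fun m => fm m x) atTop (nhds (f x))) →
    Monotone (fun m => N (fm m)) ∧ Tendsto (fun m => N (fm m)) atTop (nhds (N f))) ∧
  (∀ (x : Fin n → ℝ) (r : ℝ), 0 < r →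
    N ((eucBall n x r).indicator fun _ => (1 : ℝ≥0∞)) ≠ ∞)

/-- `N` is a ball Banach function norm: a ball quasi-Banach function norm that moreover
satisfies the triangle inequality and locally dominates the `L¹` norm. -/
def IsBallBanachNorm (n : ℕ) (N : ((Fin n → ℝ) → ℝ≥0∞) → ℝ≥0∞) : Prop :=
  IsBQBFNorm n N ∧
  (∀ f g : (Fin n → ℝ) → ℝ≥0∞, Measurable f → Measurable g → N (f + g) ≤ N f + N g) ∧
  (∀ (x : Fin n → ℝ) (r : ℝ), 0 < r → ∃ C : ℝ≥0∞, 0 < C ∧ C ≠ ∞ ∧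
    ∀ f : (Fin n → ℝ) → ℝ≥0∞, Measurable f → (∫⁻ y in eucBall n x r, f y) ≤ C * N f)

/-- The associate (Köthe dual) norm of a function norm `N`. -/
def assocNormOf (n : ℕ) (N : ((Fin n → ℝ) → ℝ≥0∞) → ℝ≥0∞)
    (f : (Fin n → ℝ) → ℝ≥0∞) : ℝ≥0∞ :=
  ⨆ (g : (Fin n → ℝ) → ℝ≥0∞) (_ : Measurable g) (_ : N g = 1), ∫⁻ x, f x * g x

/-- The `θ`-convexification of a function norm: `‖f‖_{X^θ} = ‖|f|^θ‖_X^{1/θ}`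
(here stated with `θ` in place of `1/p`, so `X^{1/p}` is `convexPow n (1/p) N`). -/
def convexPow (n : ℕ) (θ : ℝ) (N : ((Fin n → ℝ) → ℝ≥0∞) → ℝ≥0∞)
    (f : (Fin n → ℝ) → ℝ≥0∞) : ℝ≥0∞ :=
  N (fun x => f x ^ θ) ^ (1 / θ)

/-- The associate space norm of the mixed-norm Herz space, for complex-valued functions. -/
def herzAssocNormC (n : ℕ) (α : Fin n → ℝ) (p q : Fin n → ℝ≥0∞)
    (f : (Fin n → ℝ) → ℂ) : ℝ≥0∞ :=
  ⨆ (g : (Fin n → ℝ) → ℂ) (_ : Measurable g) (_ : herzNormC n α p q g = 1),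
    ∫⁻ x, (‖f x * g x‖₊ : ℝ≥0∞)
theorem aux_rpow_liminf (r : ℝ) (hr : 0 < r) (u : ℕ → ℝ≥0∞) :
    (Filter.liminf u Filter.atTop) ^ r = Filter.liminf (fun k => u k ^ r) Filter.atTop := by
  have := (ENNReal.monotone_rpow_of_nonneg hr.le).map_liminf_of_continuousAt (F := atTop) u
    (ENNReal.continuous_rpow_const.continuousAt)
  simpa [Function.comp_def] using this

theorem aux_mul_liminf (c : ℝ≥0∞) (hc : c ≠ ∞) (u : ℕ → ℝ≥0∞) :
    c * (Filter.liminf u Filter.atTop) = Filter.liminf (fun k => c * u k) Filter.atTop := by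
  have hm : Monotone (fun x : ℝ≥0∞ => c * x) := fun a b h => mul_le_mul_right h c
  have := hm.map_liminf_of_continuousAt (F := atTop) u
    ((ENNReal.continuous_const_mul hc).continuousAt)
  simpa [Function.comp_def] using this

theorem aux_ring_meas (k : ℤ) : MeasurableSet (herzRing k) :=
  measurableSet_Ioo.diff measurableSet_Ioo

theorem aux_lq_mono (q : ℝ≥0∞) (s : Set ℝ) {g h : ℝ → ℝ≥0∞} (H : ∀ x, g x ≤ h x) :
    lqNormOn q s g ≤ lqNormOn q s h := by
  unfold lqNormOn
  split_ifs
  · exact essSup_mono_ae (Eventually.of_forall fun x => Set.indicator_le_indicator (H x))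
  · exact ENNReal.rpow_le_rpow (lintegral_mono fun x =>
      ENNReal.rpow_le_rpow (H x) ENNReal.toReal_nonneg) (by positivity)

theorem aux_lp_mono (p : ℝ≥0∞) {g h : ℤ → ℝ≥0∞} (H : ∀ x, g x ≤ h x) :
    lpZNorm p g ≤ lpZNorm p h := by
  unfold lpZNorm
  split_ifs
  · exact iSup_mono H
  · exact ENNReal.rpow_le_rpow (ENNReal.tsum_le_tsum fun x =>
      ENNReal.rpow_le_rpow (H x) ENNReal.toReal_nonneg) (by positivity)

theorem aux_lq_fatou (q : ℝ≥0∞) (hq : 0 < q) (s : Set ℝ) (g : ℕ → ℝ → ℝ≥0∞)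
    (hg : ∀ k, Measurable (g k)) :
    lqNormOn q s (fun x => liminf (fun k => g k x) atTop) ≤
      liminf (fun k => lqNormOn q s (g k)) atTop := by
  unfold lqNormOn
  split_ifs with h
  · refine essSup_le_of_ae_le _ ?_
    have : ∀ᵐ x ∂(volume : Measure ℝ), ∀ k, s.indicator (g k) x ≤ essSup (s.indicator (g k)) volume :=
      ae_all_iff.2 fun k => ENNReal.ae_le_essSup _
    filter_upwards [this] with x hx
    by_cases hs : x ∈ s
    · simp only [Set.indicator_of_mem hs] at hx ⊢
      exact liminf_le_liminf (Eventually.of_forall hx)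
    · simp [hs]
  · have hr : 0 < q.toReal := ENNReal.toReal_pos hq.ne' h
    rw [← aux_rpow_liminf _ (by positivity)]
    refine ENNReal.rpow_le_rpow ?_ (by positivity)
    simp only [aux_rpow_liminf _ hr]
    exact lintegral_liminf_le fun k => (hg k).pow_const _

theorem aux_lp_fatou (p : ℝ≥0∞) (hp : 0 < p) (a : ℕ → ℤ → ℝ≥0∞) :
    lpZNorm p (fun j => liminf (fun k => a k j) atTop) ≤
      liminf (fun k => lpZNorm p (a k)) atTop := by
  unfold lpZNorm
  split_ifs with h
  · exact iSup_le fun j => liminf_le_liminf (Eventually.of_forall fun k => le_iSup (a k) j)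
  · have hr : 0 < p.toReal := ENNReal.toReal_pos hp.ne' h
    rw [← aux_rpow_liminf _ (by positivity)]
    refine ENNReal.rpow_le_rpow ?_ (by positivity)
    simp only [aux_rpow_liminf _ hr, ← lintegral_count]
    exact lintegral_liminf_le fun k => measurable_of_countable _

theorem aux_h1_mono (α : ℝ) (p q : ℝ≥0∞) {g h : ℝ → ℝ≥0∞} (H : ∀ x, g x ≤ h x) :
    herzNorm1 α p q g ≤ herzNorm1 α p q h :=
  aux_lp_mono p fun _ => mul_le_mul_right (aux_lq_mono q _ H) _

theorem aux_h1_fatou (α : ℝ) (p q : ℝ≥0∞) (hp : 0 < p) (hq : 0 < q) (g : ℕ → ℝ → ℝ≥0∞)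
    (hg : ∀ k, Measurable (g k)) :
    herzNorm1 α p q (fun x => liminf (fun k => g k x) atTop) ≤
      liminf (fun k => herzNorm1 α p q (g k)) atTop := by
  unfold herzNorm1
  refine le_trans (aux_lp_mono p fun j => ?_) (aux_lp_fatou p hp _)
  rw [← aux_mul_liminf _ ENNReal.ofReal_ne_top]
  exact mul_le_mul_right (aux_lq_fatou q hq _ g hg) _

theorem aux_lq_meas {β : Type} [MeasurableSpace β] (q : ℝ≥0∞) (s : Set ℝ) (hs : MeasurableSet s)
    (F : β → ℝ → ℝ≥0∞) (hF : Measurable (Function.uncurry F)) :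
    Measurable fun b => lqNormOn q s (F b) := by
  unfold lqNormOn
  split_ifs
  · refine measurable_of_Iic fun c => ?_
    have hG : Measurable (fun z : β × ℝ => s.indicator (F z.1) z.2) := by
      have : (fun z : β × ℝ => s.indicator (F z.1) z.2) =
          (Prod.snd ⁻¹' s).indicator (Function.uncurry F) := by
        ext z; rfl
      rw [this]
      exact hF.indicator (measurable_snd hs)
    have hS : MeasurableSet {z : β × ℝ | c < s.indicator (F z.1) z.2} :=
      measurableSet_lt measurable_const hG
    have hm := measurable_measure_prodMk_left (ν := (volume : Measure ℝ)) hS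
    convert hm (measurableSet_singleton 0) using 1
    ext b
    simp only [Set.mem_preimage, Set.mem_Iic, Set.mem_singleton_iff, Set.preimage_ofPred_eq]
    constructor
    · intro h
      have := ENNReal.ae_le_essSup (μ := (volume : Measure ℝ)) (s.indicator (F b))
      have h2 : ∀ᵐ x ∂(volume : Measure ℝ), s.indicator (F b) x ≤ c :=
        this.mono fun x hx => hx.trans h
      simpa [ae_iff] using h2
    · intro h
      refine essSup_le_of_ae_le _ ?_
      change ∀ᵐ x ∂(volume : Measure ℝ), s.indicator (F b) x ≤ c
      simpa [ae_iff] using h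
  · exact (Measurable.lintegral_prod_right (hF.pow_const _)).pow_const _

theorem aux_h1_meas {β : Type} [MeasurableSpace β] (α : ℝ) (p q : ℝ≥0∞)
    (F : β → ℝ → ℝ≥0∞) (hF : Measurable (Function.uncurry F)) :
    Measurable fun b => herzNorm1 α p q (F b) := by
  have h := fun k : ℤ => (aux_lq_meas q _ (aux_ring_meas k) F hF).const_mul
    (ENNReal.ofReal ((2 : ℝ) ^ ((k : ℝ) * α)))
  unfold herzNorm1 lpZNorm
  split_ifs
  · exact Measurable.iSup h
  · exact (Measurable.tsum fun k => (h k).pow_const _).pow_const _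

theorem aux_snoc_meas (n : ℕ) :
    Measurable fun z : (Fin n → ℝ) × ℝ => (Fin.snoc z.1 z.2 : Fin (n + 1) → ℝ) := by
  refine measurable_pi_lambda _ fun i => ?_
  refine Fin.lastCases ?_ (fun j => ?_) i
  · simpa using measurable_snd
  · simp only [Fin.snoc_castSucc]
    exact (measurable_pi_apply j).comp measurable_fst

theorem aux_mixed_meas (n : ℕ) : ∀ {β : Type} [MeasurableSpace β] (α : Fin n → ℝ)
    (p q : Fin n → ℝ≥0∞) (F : β → (Fin n → ℝ) → ℝ≥0∞) (_ : Measurable (Function.uncurry F)),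
    Measurable fun b => mixedHerzNormE n α p q (F b) := by
  induction n with
  | zero =>
    intro β _ α p q F hF
    simp only [mixedHerzNormE]
    exact hF.comp (measurable_id.prodMk measurable_const)
  | succ n ih =>
    intro β _ α p q F hF
    simp only [mixedHerzNormE]
    refine aux_h1_meas _ _ _ _ ?_
    refine ih (β := β × ℝ) _ _ _ (fun z y => F z.1 (Fin.snoc y z.2)) ?_
    exact hF.comp ((measurable_fst.comp measurable_fst).prodMk
      ((aux_snoc_meas n).comp (measurable_snd.prodMk (measurable_snd.comp measurable_fst))))

/-- the Fatou lemma for the mixed-norm Herz norm. -/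
theorem mixedHerz_fatou (n : ℕ) (p q : Fin n → ℝ≥0∞) (α : Fin n → ℝ)
    (hp : ∀ i, 0 < p i) (hq : ∀ i, 0 < q i)
    (f : ℕ → (Fin n → ℝ) → ℝ≥0∞) (hf : ∀ k, Measurable (f k)) :
    mixedHerzNormE n α p q (fun x => Filter.liminf (fun k => f k x) Filter.atTop) ≤
      Filter.liminf (fun k => mixedHerzNormE n α p q (f k)) Filter.atTop := by
  induction n with
  | zero => simp only [mixedHerzNormE]; exact le_rfl
  | succ n ih =>
    simp only [mixedHerzNormE]
    refine le_trans (aux_h1_mono _ _ _ fun x => ?_)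
      (aux_h1_fatou _ _ _ (hp _) (hq _) _ fun k => ?_)
    · exact ih _ _ _ (fun i => hp _) (fun i => hq _) (fun k y => f k (Fin.snoc y x))
        fun k => (hf k).comp ((aux_snoc_meas n).comp (measurable_id.prodMk measurable_const))
    · exact aux_mixed_meas n _ _ _ (fun x y => f k (Fin.snoc y x))
        ((hf k).comp ((aux_snoc_meas n).comp (measurable_snd.prodMk measurable_fst)))
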